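/- arXiv:1710.10603 — 3 statements merged into one kernel-verified Lean document; each statement's English description precedes it below -/
import Mathlib

section
/- Let Φ be a measurable function on ℝ^n and A(y) a measurable n×n-matrix-valued function with A(y) invertible for a.e. y in the support of Φ, satisfying ∫_{ℝ^n} |det A(y)|^{-1} (1 + ‖A(y)‖) |Φ(y)| dy < ∞. Then for every f ∈ W^{1,1}(ℝ^n), the weak gradient of H_{Φ,A} f is given for a.e. x by ∇(H_{Φ,A} f)(x) = ∫_{ℝ^n} Φ(y) ∇f(A(y)x) · A(y) dy, where ∇f is the row vector of first-order weak partial derivatives of f. -/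
open MeasureTheory

noncomputable section

/-- Action of an `n × n` matrix on a vector of `ℝⁿ` (Euclidean space). -/
def matVec {n : ℕ} (M : Matrix (Fin n) (Fin n) ℝ) (x : EuclideanSpace ℝ (Fin n)) :
    EuclideanSpace ℝ (Fin n) :=
  (WithLp.equiv 2 (Fin n → ℝ)).symm (M.mulVec (WithLp.equiv 2 (Fin n → ℝ) x))

/-- Hilbert–Schmidt (Frobenius) norm of a matrix. -/
def frobNorm {n : ℕ} (M : Matrix (Fin n) (Fin n) ℝ) : ℝ :=
  Real.sqrt (∑ i, ∑ j, (M i j) ^ 2)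

/-- Classical partial derivative `∂/∂xᵢ`. -/
def pderiv1 {n : ℕ} (i : Fin n) (f : EuclideanSpace ℝ (Fin n) → ℝ) :
    EuclideanSpace ℝ (Fin n) → ℝ :=
  fun x => fderiv ℝ f x (EuclideanSpace.single i 1)

/-- Classical multi-index derivative `D^α = ∂^{α₁}_{x₁} ⋯ ∂^{αₙ}_{xₙ}`. -/
def mderiv {n : ℕ} (α : Fin n → ℕ) (f : EuclideanSpace ℝ (Fin n) → ℝ) :
    EuclideanSpace ℝ (Fin n) → ℝ :=
  (List.finRange n).foldr (fun i g => (pderiv1 i)^[α i] g) f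

/-- `g` is the weak derivative of order `α` of `f`:
`∫ f · D^α φ = (−1)^{|α|} ∫ g · φ` for all test functions `φ ∈ C_c^∞`. -/
def IsWeakDeriv {n : ℕ} (α : Fin n → ℕ) (f g : EuclideanSpace ℝ (Fin n) → ℝ) : Prop :=
  ∀ φ : EuclideanSpace ℝ (Fin n) → ℝ, ContDiff ℝ (⊤ : ℕ∞) φ → HasCompactSupport φ →
    ∫ x, f x * mderiv α φ x = (-1 : ℝ) ^ (∑ i, α i) * ∫ x, g x * φ x

/-- `D` is a family of integrable weak derivatives of `f` for all multi-indices `|α| ≤ k`;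
this expresses `f ∈ W^{k,1}(ℝⁿ)` together with a choice of its weak derivatives. -/
def HasSobolevDerivs {n : ℕ} (k : ℕ) (f : EuclideanSpace ℝ (Fin n) → ℝ)
    (D : (Fin n → ℕ) → EuclideanSpace ℝ (Fin n) → ℝ) : Prop :=
  D 0 = f ∧ ∀ α : Fin n → ℕ, (∑ i, α i) ≤ k → Integrable (D α) ∧ IsWeakDeriv α f (D α)

/-- The Sobolev norm `‖f‖_{W^{k,1}} = Σ_{|α| ≤ k} ‖D^α f‖_{L¹}`, computed from a family `D`
of weak derivatives. -/
def sobolevNorm {n : ℕ} (k : ℕ) (D : (Fin n → ℕ) → EuclideanSpace ℝ (Fin n) → ℝ) : ℝ :=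
  ∑ α ∈ (Fintype.piFinset fun _ : Fin n => Finset.range (k + 1)).filter
      (fun α => ∑ i, α i ≤ k), ∫ x, |D α x|

/-- The generalized Hausdorff operator `H_{Φ,A} f (x) = ∫ Φ(y) f(A(y)x) dy`. -/
def hausdorffOp {n : ℕ} (Φ : EuclideanSpace ℝ (Fin n) → ℝ)
    (A : EuclideanSpace ℝ (Fin n) → Matrix (Fin n) (Fin n) ℝ)
    (f : EuclideanSpace ℝ (Fin n) → ℝ) : EuclideanSpace ℝ (Fin n) → ℝ :=
  fun x => ∫ y, Φ y * f (matVec (A y) x)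

/-!
For a single invertible matrix `M`, testing `f ∘ M` against `φ` and substituting `z = M x` amounts
to testing `f` against `ψ = φ ∘ M⁻¹`; since `∂ⱼφ (x) = ∑ i, ∂ᵢψ (M x) M i j`, the weak gradient
of `f ∘ M` is `(∇f ∘ M) M`. Fubini's theorem then lets the integral in `y` pass through the
definition of the weak derivative: it applies because `∫ |h (A y x)| dx = |det (A y)|⁻¹ ‖h‖₁` and
the entries of `A y` are bounded by its Frobenius norm.
-/

section LinearChangeOfVariables

variable {E F : Type*} [NormedAddCommGroup E] [NormedSpace ℝ E] [FiniteDimensional ℝ E]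
  [MeasurableSpace E] [BorelSpace E] [NormedAddCommGroup F]
  (μ : Measure E) [μ.IsAddHaarMeasure] {L : E →ₗ[ℝ] E}

lemma measurableEmbedding_of_det_ne_zero (hL : LinearMap.det L ≠ 0) : MeasurableEmbedding L :=
  (L.equivOfDetNeZero hL).toContinuousLinearEquiv.toHomeomorph.measurableEmbedding

lemma integral_comp_linearMap [NormedSpace ℝ F] (hL : LinearMap.det L ≠ 0) (h : E → F) :
    ∫ x, h (L x) ∂μ = |LinearMap.det L|⁻¹ • ∫ x, h x ∂μ := by
  rw [← (measurableEmbedding_of_det_ne_zero hL).integral_map,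
    Measure.map_linearMap_addHaar_eq_smul_addHaar μ hL, integral_smul_measure,
    ENNReal.toReal_ofReal (abs_nonneg _), abs_inv]

lemma integrable_comp_linearMap (hL : LinearMap.det L ≠ 0) {h : E → F} (hh : Integrable h μ) :
    Integrable (fun x => h (L x)) μ := by
  refine (measurableEmbedding_of_det_ne_zero hL).integrable_map_iff.1 ?_
  rw [Measure.map_linearMap_addHaar_eq_smul_addHaar μ hL]
  exact hh.smul_measure ENNReal.ofReal_ne_top

end LinearChangeOfVariables

section MatrixAction

variable {n : ℕ} {M : Matrix (Fin n) (Fin n) ℝ} {F : Type*} [NormedAddCommGroup F]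

lemma matVec_eq_toLpLin (M : Matrix (Fin n) (Fin n) ℝ) : matVec M = Matrix.toLpLin 2 2 M := rfl

lemma matVec_apply (M : Matrix (Fin n) (Fin n) ℝ) (x : EuclideanSpace ℝ (Fin n)) (i : Fin n) :
    matVec M x i = ∑ k, M i k * x k := rfl

lemma matVec_single (M : Matrix (Fin n) (Fin n) ℝ) (j : Fin n) :
    matVec M (EuclideanSpace.single j 1) = ∑ i, M i j • EuclideanSpace.single i (1 : ℝ) := by
  ext i
  simp [matVec_apply, Pi.single_apply]

lemma det_toLpLin_ne_zero (hM : M.det ≠ 0) : LinearMap.det (Matrix.toLpLin 2 2 M) ≠ 0 := by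
  rwa [LinearMap.det_toLpLin]

lemma exists_continuousLinearEquiv_eq_matVec (hM : M.det ≠ 0) :
    ∃ e : EuclideanSpace ℝ (Fin n) ≃L[ℝ] EuclideanSpace ℝ (Fin n), ⇑e = matVec M :=
  ⟨(LinearMap.equivOfDetNeZero _ (det_toLpLin_ne_zero hM)).toContinuousLinearEquiv, rfl⟩

lemma integral_comp_matVec [NormedSpace ℝ F] (hM : M.det ≠ 0) (h : EuclideanSpace ℝ (Fin n) → F) :
    ∫ x, h (matVec M x) = |M.det|⁻¹ • ∫ x, h x := by
  rw [matVec_eq_toLpLin, integral_comp_linearMap volume (det_toLpLin_ne_zero hM),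
    LinearMap.det_toLpLin]

lemma integrable_comp_matVec (hM : M.det ≠ 0) {h : EuclideanSpace ℝ (Fin n) → F}
    (hh : Integrable h) : Integrable (fun x => h (matVec M x)) :=
  integrable_comp_linearMap volume (det_toLpLin_ne_zero hM) hh

lemma abs_apply_le_frobNorm (M : Matrix (Fin n) (Fin n) ℝ) (i j : Fin n) :
    |M i j| ≤ frobNorm M := by
  refine Real.abs_le_sqrt ?_
  calc (M i j) ^ 2 ≤ ∑ k, (M i k) ^ 2 :=
        Finset.single_le_sum (f := fun k => (M i k) ^ 2) (fun _ _ => sq_nonneg _)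
          (Finset.mem_univ j)
    _ ≤ ∑ l, ∑ k, (M l k) ^ 2 :=
        Finset.single_le_sum (f := fun l => ∑ k, (M l k) ^ 2)
          (fun _ _ => Finset.sum_nonneg fun _ _ => sq_nonneg _) (Finset.mem_univ i)

end MatrixAction

section MeasurableMatrixFamily

variable {n : ℕ} {Y : Type*} [MeasurableSpace Y] {μ : Measure Y}
  {A : Y → Matrix (Fin n) (Fin n) ℝ}

lemma measurable_det_of_measurable_apply {ι : Type*} [Fintype ι] [DecidableEq ι]
    {B : Y → Matrix ι ι ℝ} (hB : ∀ i j, Measurable fun y => B y i j) :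
    Measurable fun y => (B y).det := by
  simp_rw [Matrix.det_apply]
  exact Finset.measurable_sum _ fun σ _ =>
    (Finset.measurable_prod _ fun i _ => hB (σ i) i).const_smul _

lemma measurable_matVec_uncurry (hA : ∀ i j, Measurable fun y => A y i j) :
    Measurable fun p : Y × EuclideanSpace ℝ (Fin n) => matVec (A p.1) p.2 := by
  have hcoord (i : Fin n) :
      Measurable fun p : Y × EuclideanSpace ℝ (Fin n) => ∑ k, A p.1 i k * p.2 k :=
    Finset.measurable_sum _ fun k _ => ((hA i k).comp measurable_fst).mul (by fun_prop)
  exact (WithLp.measurable_toLp 2 (Fin n → ℝ)).comp (measurable_pi_lambda _ hcoord)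

lemma quasiMeasurePreserving_matVec_uncurry (hA : ∀ i j, Measurable fun y => A y i j)
    (hinv : ∀ᵐ y ∂μ, (A y).det ≠ 0) :
    Measure.QuasiMeasurePreserving (fun p : Y × EuclideanSpace ℝ (Fin n) => matVec (A p.1) p.2)
      (μ.prod volume) volume :=
  QuasiMeasurePreserving.prod_of_right (measurable_matVec_uncurry hA) <| hinv.mono fun _ hy =>
    Measure.LinearMap.quasiMeasurePreserving volume _ (det_toLpLin_ne_zero hy)

variable {F : Type*} [NormedAddCommGroup F] [NormedSpace ℝ F] {w : Y → ℝ}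
  {h : EuclideanSpace ℝ (Fin n) → F}

lemma integrable_prod_smul_comp_matVec_of_ae_det_ne_zero
    (hA : ∀ i j, Measurable fun y => A y i j) (hinv : ∀ᵐ y ∂μ, (A y).det ≠ 0)
    (hw : Integrable (fun y => |(A y).det|⁻¹ * w y) μ) (hh : Integrable h) :
    Integrable (fun p : Y × EuclideanSpace ℝ (Fin n) => w p.1 • h (matVec (A p.1) p.2))
      (μ.prod volume) := by
  have hw_meas : AEStronglyMeasurable w μ := by
    refine ((measurable_det_of_measurable_apply hA).abs.aestronglyMeasurable.mul hw.1).congr ?_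
    filter_upwards [hinv] with y hy
    exact mul_inv_cancel_left₀ (abs_ne_zero.2 hy) _
  have hh_meas := hh.1.comp_quasiMeasurePreserving (quasiMeasurePreserving_matVec_uncurry hA hinv)
  refine (integrable_prod_iff (hw_meas.comp_fst.smul hh_meas)).2 ⟨?_, ?_⟩
  · filter_upwards [hinv] with y hy
    exact (integrable_comp_matVec hy hh).smul (w y)
  · refine (hw.norm.mul_const (∫ x, ‖h x‖)).congr ?_
    filter_upwards [hinv] with y hy
    simp only [Pi.smul_apply', Function.comp_apply, norm_smul, norm_mul, norm_inv, norm_abs_eq_norm]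
    rw [integral_const_mul, integral_comp_matVec hy fun x => ‖h x‖, smul_eq_mul, Real.norm_eq_abs]
    ring

lemma integrable_prod_smul_comp_matVec [SFinite μ]
    (hA : ∀ i j, Measurable fun y => A y i j)
    (hinv : ∀ᵐ y ∂μ, w y ≠ 0 → (A y).det ≠ 0)
    (hw : Integrable (fun y => |(A y).det|⁻¹ * w y) μ) (hh : Integrable h) :
    Integrable (fun p : Y × EuclideanSpace ℝ (Fin n) => w p.1 • h (matVec (A p.1) p.2))
      (μ.prod volume) := by
  set S : Set Y := {y | (A y).det ≠ 0}
  have hS : MeasurableSet S :=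
    measurable_det_of_measurable_apply hA (measurableSet_singleton 0).compl
  have hint : IntegrableOn (fun p : Y × EuclideanSpace ℝ (Fin n) =>
      w p.1 • h (matVec (A p.1) p.2)) (S ×ˢ Set.univ) (μ.prod volume) := by
    rw [IntegrableOn, ← Measure.prod_restrict, Measure.restrict_univ]
    exact integrable_prod_smul_comp_matVec_of_ae_det_ne_zero hA (ae_restrict_mem hS)
      hw.integrableOn hh
  refine hint.integrable_of_ae_notMem_eq_zero ?_
  filter_upwards [Measure.quasiMeasurePreserving_fst.ae hinv] with p hp hpS
  have hwp : w p.1 = 0 := by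
    by_contra hne
    exact hpS ⟨hp hne, Set.mem_univ _⟩
  rw [hwp, zero_smul]

lemma integrable_inv_abs_det_mul_mul_of_abs_le (hA : ∀ i j, Measurable fun y => A y i j)
    (hw : AEStronglyMeasurable w μ)
    (hint : Integrable (fun y => |(A y).det|⁻¹ * (1 + frobNorm (A y)) * |w y|) μ)
    {c : Y → ℝ} (hc : AEStronglyMeasurable c μ) (hc_le : ∀ y, |c y| ≤ 1 + frobNorm (A y)) :
    Integrable (fun y => |(A y).det|⁻¹ * (w y * c y)) μ := by
  have hdet_meas : Measurable fun y => |(A y).det|⁻¹ :=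
    (measurable_det_of_measurable_apply hA).abs.inv
  refine hint.mono' (hdet_meas.aestronglyMeasurable.mul (hw.mul hc)) (.of_forall fun y => ?_)
  calc ‖|(A y).det|⁻¹ * (w y * c y)‖ = |(A y).det|⁻¹ * |c y| * |w y| := by
        simp only [norm_mul, norm_inv, Real.norm_eq_abs, abs_abs]
        ring
    _ ≤ |(A y).det|⁻¹ * (1 + frobNorm (A y)) * |w y| := by gcongr; exact hc_le y

end MeasurableMatrixFamily

section ClassicalDerivatives

variable {n : ℕ} {φ : EuclideanSpace ℝ (Fin n) → ℝ}

lemma contDiff_pderiv1 (hφ : ContDiff ℝ (⊤ : ℕ∞) φ) (i : Fin n) :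
    ContDiff ℝ (⊤ : ℕ∞) (pderiv1 i φ) :=
  (hφ.fderiv_right le_rfl).clm_apply contDiff_const

lemma hasCompactSupport_pderiv1 (hφ : HasCompactSupport φ) (i : Fin n) :
    HasCompactSupport (pderiv1 i φ) :=
  hφ.fderiv_apply ℝ _

lemma pderiv1_comp_matVec (M : Matrix (Fin n) (Fin n) ℝ) {x : EuclideanSpace ℝ (Fin n)}
    (hφ : DifferentiableAt ℝ φ (matVec M x)) (j : Fin n) :
    pderiv1 j (fun x => φ (matVec M x)) x = ∑ i, pderiv1 i φ (matVec M x) * M i j := by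
  have hM : HasFDerivAt (matVec M) (Matrix.toLpLin 2 2 M).toContinuousLinearMap x :=
    (Matrix.toLpLin 2 2 M).toContinuousLinearMap.hasFDerivAt
  calc pderiv1 j (fun x => φ (matVec M x)) x
      = fderiv ℝ φ (matVec M x) (matVec M (EuclideanSpace.single j 1)) :=
        DFunLike.congr_fun (hφ.hasFDerivAt.comp x hM).fderiv _
    _ = ∑ i, pderiv1 i φ (matVec M x) * M i j := by
        simp only [matVec_single, map_sum, map_smul, smul_eq_mul, pderiv1, mul_comm]

lemma mderiv_induction {P : (EuclideanSpace ℝ (Fin n) → ℝ) → Prop}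
    (h_pderiv1 : ∀ i ψ, P ψ → P (pderiv1 i ψ)) (hφ : P φ) (α : Fin n → ℕ) : P (mderiv α φ) :=
  List.foldrRecOn _ _ hφ fun _ hψ i _ => Function.Iterate.rec P hψ (h_pderiv1 i) (α i)

lemma contDiff_mderiv (hφ : ContDiff ℝ (⊤ : ℕ∞) φ) (α : Fin n → ℕ) :
    ContDiff ℝ (⊤ : ℕ∞) (mderiv α φ) :=
  mderiv_induction (P := ContDiff ℝ (⊤ : ℕ∞)) (fun i _ hψ => contDiff_pderiv1 hψ i) hφ α

lemma hasCompactSupport_mderiv (hφ : HasCompactSupport φ) (α : Fin n → ℕ) :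
    HasCompactSupport (mderiv α φ) :=
  mderiv_induction (P := HasCompactSupport) (fun i _ hψ => hasCompactSupport_pderiv1 hψ i) hφ α

lemma foldr_iterate_single {ι β : Type*} [DecidableEq ι] (F : ι → β → β) (j : ι) (b : β)
    {l : List ι} (hl : l.Nodup) :
    l.foldr (fun i => (F i)^[(Pi.single j 1 : ι → ℕ) i]) b = if j ∈ l then F j b else b := by
  induction l with
  | nil => simp
  | cons a l ih =>
    obtain ⟨ha, hl⟩ := List.nodup_cons.1 hl
    rw [List.foldr_cons, ih hl]
    obtain rfl | haj := eq_or_ne a j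
    · simp [ha]
    · simp [haj, haj.symm]

lemma mderiv_single (j : Fin n) (φ : EuclideanSpace ℝ (Fin n) → ℝ) :
    mderiv (Pi.single j 1) φ = pderiv1 j φ := by
  rw [mderiv, foldr_iterate_single pderiv1 j φ (List.nodup_finRange n),
    if_pos (List.mem_finRange j)]

end ClassicalDerivatives

section WeakDerivatives

variable {n : ℕ} {f : EuclideanSpace ℝ (Fin n) → ℝ} {g : Fin n → EuclideanSpace ℝ (Fin n) → ℝ}

lemma isWeakDeriv_single_iff (j : Fin n) (f g : EuclideanSpace ℝ (Fin n) → ℝ) :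
    IsWeakDeriv (Pi.single j 1) f g ↔
      ∀ φ : EuclideanSpace ℝ (Fin n) → ℝ, ContDiff ℝ (⊤ : ℕ∞) φ → HasCompactSupport φ →
        ∫ x, f x * pderiv1 j φ x = -∫ x, g x * φ x := by
  simp [IsWeakDeriv, mderiv_single]

lemma IsWeakDeriv.const_mul {α : Fin n → ℕ} {f g : EuclideanSpace ℝ (Fin n) → ℝ}
    (hfg : IsWeakDeriv α f g) (c : ℝ) :
    IsWeakDeriv α (fun x => c * f x) (fun x => c * g x) := by
  intro φ hφ hφs
  simp only [mul_assoc, integral_const_mul]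
  rw [hfg φ hφ hφs, mul_left_comm]

lemma integral_mul_sum_pderiv1_mul (hf : LocallyIntegrable f) (hg : ∀ i, LocallyIntegrable (g i))
    (hfg : ∀ i, IsWeakDeriv (Pi.single i 1) f (g i)) {ψ : EuclideanSpace ℝ (Fin n) → ℝ}
    (hψ : ContDiff ℝ (⊤ : ℕ∞) ψ) (hψs : HasCompactSupport ψ) (c : Fin n → ℝ) :
    ∫ z, f z * ∑ i, pderiv1 i ψ z * c i = -∫ z, (∑ i, g i z * c i) * ψ z := by
  have hf_int (i : Fin n) : Integrable fun z => f z * pderiv1 i ψ z := by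
    simpa only [smul_eq_mul, mul_comm] using hf.integrable_smul_left_of_hasCompactSupport
      (contDiff_pderiv1 hψ i).continuous (hasCompactSupport_pderiv1 hψs i)
  have hg_int (i : Fin n) : Integrable fun z => g i z * ψ z := by
    simpa only [smul_eq_mul, mul_comm] using
      (hg i).integrable_smul_left_of_hasCompactSupport hψ.continuous hψs
  calc ∫ z, f z * ∑ i, pderiv1 i ψ z * c i
      = ∑ i, (∫ z, f z * pderiv1 i ψ z) * c i := by
        simp only [Finset.mul_sum, ← mul_assoc]
        rw [integral_finsetSum _ fun i _ => (hf_int i).mul_const (c i)]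
        simp only [integral_mul_const]
    _ = -∑ i, (∫ z, g i z * ψ z) * c i := by
        simp only [(isWeakDeriv_single_iff _ _ _).1 (hfg _) ψ hψ hψs, neg_mul,
          Finset.sum_neg_distrib]
    _ = -∫ z, (∑ i, g i z * c i) * ψ z := by
        simp only [Finset.sum_mul, mul_right_comm _ (c _)]
        rw [integral_finsetSum _ fun i _ => (hg_int i).mul_const (c i)]
        simp only [integral_mul_const]

lemma isWeakDeriv_comp_matVec {M : Matrix (Fin n) (Fin n) ℝ} (hM : M.det ≠ 0)
    (hf : LocallyIntegrable f) (hg : ∀ i, LocallyIntegrable (g i))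
    (hfg : ∀ i, IsWeakDeriv (Pi.single i 1) f (g i)) (j : Fin n) :
    IsWeakDeriv (Pi.single j 1) (fun x => f (matVec M x))
      (fun x => ∑ i, g i (matVec M x) * M i j) := by
  refine (isWeakDeriv_single_iff _ _ _).2 fun φ hφ hφs => ?_
  obtain ⟨e, he⟩ := exists_continuousLinearEquiv_eq_matVec hM
  set ψ : EuclideanSpace ℝ (Fin n) → ℝ := φ ∘ e.symm with hψ_def
  have hψ : ContDiff ℝ (⊤ : ℕ∞) ψ := hφ.comp e.symm.contDiff
  have hψs : HasCompactSupport ψ := hφs.comp_homeomorph e.symm.toHomeomorph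
  have hφψ (x : EuclideanSpace ℝ (Fin n)) : φ x = ψ (matVec M x) := by simp [hψ_def, ← he]
  have hpderiv (x : EuclideanSpace ℝ (Fin n)) :
      pderiv1 j φ x = ∑ i, pderiv1 i ψ (matVec M x) * M i j := by
    rw [funext hφψ, pderiv1_comp_matVec M (hψ.differentiable (by simp) _)]
  calc ∫ x, f (matVec M x) * pderiv1 j φ x
      = |M.det|⁻¹ • ∫ z, f z * ∑ i, pderiv1 i ψ z * M i j := by
        simp only [hpderiv]
        exact integral_comp_matVec hM fun z => f z * ∑ i, pderiv1 i ψ z * M i j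
    _ = -(|M.det|⁻¹ • ∫ z, (∑ i, g i z * M i j) * ψ z) := by
        rw [integral_mul_sum_pderiv1_mul hf hg hfg hψ hψs, smul_neg]
    _ = -∫ x, (∑ i, g i (matVec M x) * M i j) * φ x := by
        simp only [hφψ]
        rw [integral_comp_matVec hM fun z => (∑ i, g i z * M i j) * ψ z]

end WeakDerivatives

section Superposition

variable {n : ℕ} {Y : Type*} [MeasurableSpace Y] {μ : Measure Y} [SFinite μ]

lemma integral_integral_mul_swap {X : Type*} [MeasurableSpace X] {ν : Measure X} [SFinite ν]
    {F : Y → X → ℝ} (hF : Integrable (Function.uncurry F) (μ.prod ν)) {φ : X → ℝ}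
    (hφ : AEStronglyMeasurable φ ν) {C : ℝ} (hC : ∀ x, ‖φ x‖ ≤ C) :
    ∫ x, (∫ y, F y x ∂μ) * φ x ∂ν = ∫ y, ∫ x, F y x * φ x ∂ν ∂μ := by
  simp only [← integral_mul_const]
  exact (integral_integral_swap (f := fun y x => F y x * φ x)
    (hF.mul_bdd hφ.comp_snd (.of_forall fun p => hC p.2))).symm

lemma isWeakDeriv_integral {α : Fin n → ℕ} {F G : Y → EuclideanSpace ℝ (Fin n) → ℝ}
    (hF : Integrable (Function.uncurry F) (μ.prod volume))
    (hG : Integrable (Function.uncurry G) (μ.prod volume))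
    (hFG : ∀ᵐ y ∂μ, IsWeakDeriv α (F y) (G y)) :
    IsWeakDeriv α (fun x => ∫ y, F y x ∂μ) (fun x => ∫ y, G y x ∂μ) := by
  intro φ hφ hφs
  have hDφ : Continuous (mderiv α φ) := (contDiff_mderiv hφ α).continuous
  obtain ⟨C, hC⟩ := hφs.exists_bound_of_continuous hφ.continuous
  obtain ⟨D, hD⟩ := (hasCompactSupport_mderiv hφs α).exists_bound_of_continuous hDφ
  rw [integral_integral_mul_swap hF hDφ.aestronglyMeasurable hD,
    integral_integral_mul_swap hG hφ.continuous.aestronglyMeasurable hC, ← integral_const_mul]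
  refine integral_congr_ae ?_
  filter_upwards [hFG] with y hy using hy φ hφ hφs

theorem weakGradient_hausdorffOp_general {Φ : Y → ℝ} {A : Y → Matrix (Fin n) (Fin n) ℝ}
    (hΦ : AEStronglyMeasurable Φ μ) (hA : ∀ i j, Measurable fun y => A y i j)
    (hinv : ∀ᵐ y ∂μ, Φ y ≠ 0 → (A y).det ≠ 0)
    (hint : Integrable (fun y => |(A y).det|⁻¹ * (1 + frobNorm (A y)) * |Φ y|) μ)
    {f : EuclideanSpace ℝ (Fin n) → ℝ} {g : Fin n → EuclideanSpace ℝ (Fin n) → ℝ}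
    (hf : Integrable f) (hg : ∀ i, Integrable (g i))
    (hfg : ∀ i, IsWeakDeriv (Pi.single i 1) f (g i)) (j : Fin n) :
    IsWeakDeriv (Pi.single j 1) (fun x => ∫ y, Φ y * f (matVec (A y) x) ∂μ)
      (fun x => ∫ y, Φ y * ∑ i, g i (matVec (A y) x) * A y i j ∂μ) := by
  have hΦ_int : Integrable (fun y => |(A y).det|⁻¹ * Φ y) μ := by
    simpa using integrable_inv_abs_det_mul_mul_of_abs_le hA hΦ hint
      (aestronglyMeasurable_const (b := 1)) fun y => by simp [frobNorm]
  have hΦA_int (i : Fin n) : Integrable (fun y => |(A y).det|⁻¹ * (Φ y * A y i j)) μ :=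
    integrable_inv_abs_det_mul_mul_of_abs_le hA hΦ hint (hA i j).aestronglyMeasurable fun y =>
      (abs_apply_le_frobNorm (A y) i j).trans (le_add_of_nonneg_left zero_le_one)
  have hinv_entry (i : Fin n) : ∀ᵐ y ∂μ, Φ y * A y i j ≠ 0 → (A y).det ≠ 0 :=
    hinv.mono fun _ hy hne => hy (left_ne_zero_of_mul hne)
  refine isWeakDeriv_integral (integrable_prod_smul_comp_matVec hA hinv hΦ_int hf) ?_ ?_
  · refine (integrable_finsetSum Finset.univ fun i _ =>
      integrable_prod_smul_comp_matVec hA (hinv_entry i) (hΦA_int i) (hg i)).congr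
        (.of_forall fun p => ?_)
    simp only [Function.uncurry, smul_eq_mul, Finset.mul_sum, mul_assoc, mul_comm (A _ _ _)]
  · filter_upwards [hinv] with y hy
    obtain hΦy | hΦy := eq_or_ne (Φ y) 0
    · simp [IsWeakDeriv, hΦy]
    · exact (isWeakDeriv_comp_matVec (hy hΦy) hf.locallyIntegrable
        (fun i => (hg i).locallyIntegrable) hfg j).const_mul (Φ y)

end Superposition

/-- Under the integrability condition with `k = 1`, for `f ∈ W^{1,1}(ℝⁿ)` with
weak partial derivatives `g i = ∂f/∂xᵢ`, the weak gradient of `H_{Φ,A} f` is given by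
`∇(H_{Φ,A}f)(x) = ∫ Φ(y) ∇f(A(y)x) · A(y) dy`, i.e. its `j`-th component is
`x ↦ ∫ Φ(y) (Σ_i (∂f/∂xᵢ)(A(y)x) a_{ij}(y)) dy`. -/
theorem weakGradient_hausdorffOp (n : ℕ)
    (Φ : EuclideanSpace ℝ (Fin n) → ℝ)
    (A : EuclideanSpace ℝ (Fin n) → Matrix (Fin n) (Fin n) ℝ)
    (hΦ : Measurable Φ) (hA : ∀ i j, Measurable fun y => A y i j)
    (hinv : ∀ᵐ y : EuclideanSpace ℝ (Fin n), Φ y ≠ 0 → (A y).det ≠ 0)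
    (hint : Integrable
      (fun y => |(A y).det|⁻¹ * (1 + frobNorm (A y)) * |Φ y|))
    (f : EuclideanSpace ℝ (Fin n) → ℝ)
    (g : Fin n → EuclideanSpace ℝ (Fin n) → ℝ)
    (hfL1 : Integrable f)
    (hg : ∀ i, Integrable (g i) ∧ IsWeakDeriv (Pi.single i 1) f (g i))
    (j : Fin n) :
    IsWeakDeriv (Pi.single j 1) (hausdorffOp Φ A f)
      (fun x => ∫ y, Φ y * ∑ i, g i (matVec (A y) x) * A y i j) := by
  exact weakGradient_hausdorffOp_general hΦ.aestronglyMeasurable hA hinv hint hfL1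
    (fun i => (hg i).1) (fun i => (hg i).2) j

end
end

section
/- Let Φ be a nonnegative measurable function on ℝ^n and A(y) a measurable n×n-matrix-valued function with A(y) invertible for a.e. y in the support of Φ. If there exists a nonzero nonnegative Schwartz function f on ℝ^n such that H_{Φ,A} f ∈ L^1(ℝ^n), then ∫_{ℝ^n} |det A(y)|^{-1} Φ(y) dy < ∞. -/
open MeasureTheory

noncomputable section

/-!
Substituting `z = A(y)x` in the inner integral of `∫∫ Φ(y) f(A(y)x) dx dy` produces the factor
`|det A(y)|⁻¹`, so Tonelli's theorem gives `∫ H_{Φ,A} f = (∫ |det A(y)|⁻¹ Φ(y) dy) * ∫ f` in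
`[0, ∞]`. As `∫ f > 0`, finiteness of the left side forces finiteness of the first factor.
-/

open scoped ENNReal

theorem lintegral_ofReal_ne_zero {α : Type*} [MeasurableSpace α] {ρ : Measure α} {f : α → ℝ}
    (hf : AEMeasurable f ρ) (hf0 : 0 ≤ᵐ[ρ] f) (hfne : ¬ f =ᵐ[ρ] 0) :
    ∫⁻ x, ENNReal.ofReal (f x) ∂ρ ≠ 0 := by
  rw [Ne, lintegral_eq_zero_iff' hf.ennreal_ofReal]
  intro hzero
  apply hfne
  filter_upwards [hzero, hf0] with x hx hx0
  exact le_antisymm (ENNReal.ofReal_eq_zero.1 hx) hx0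

section HausdorffOperator

variable {E Y : Type*} [NormedAddCommGroup E] [NormedSpace ℝ E] [MeasurableSpace Y]
  {μ : Measure Y} {T : Y → E →L[ℝ] E}

theorem aemeasurable_abs_det_inv (hT : AEMeasurable T μ) :
    AEMeasurable (fun y ↦ |(T y).det|⁻¹) μ :=
  (ContinuousLinearMap.continuous_det.measurable.comp_aemeasurable hT).abs.inv

variable [FiniteDimensional ℝ E] [MeasurableSpace E] [BorelSpace E]
  {ν : Measure E} [ν.IsAddHaarMeasure]

theorem lintegral_comp_linearMap {L : E →ₗ[ℝ] E} (hL : LinearMap.det L ≠ 0) (g : E → ℝ≥0∞) :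
    ∫⁻ x, g (L x) ∂ν = ENNReal.ofReal |LinearMap.det L|⁻¹ * ∫⁻ x, g x ∂ν := by
  let e : E ≃ᵐ E :=
    (L.equivOfDetNeZero hL).toContinuousLinearEquiv.toHomeomorph.toMeasurableEquiv
  have hmap : ν.map e = ENNReal.ofReal |(LinearMap.det L)⁻¹| • ν :=
    Measure.map_linearMap_addHaar_eq_smul_addHaar ν hL
  calc ∫⁻ x, g (L x) ∂ν = ∫⁻ x, g x ∂(ν.map e) := (lintegral_map_equiv g e).symm
    _ = ENNReal.ofReal |LinearMap.det L|⁻¹ * ∫⁻ x, g x ∂ν := by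
      rw [hmap, lintegral_smul_measure, abs_inv, smul_eq_mul]

theorem lintegral_lintegral_mul_comp_continuousLinearMap [SFinite μ]
    {φ : Y → ℝ≥0∞} {g : E → ℝ≥0∞} (hφ : AEMeasurable φ μ) (hT : AEMeasurable T μ)
    (hdet : ∀ᵐ y ∂μ, φ y ≠ 0 → (T y).det ≠ 0) (hg : Measurable g) :
    ∫⁻ x, ∫⁻ y, φ y * g (T y x) ∂μ ∂ν =
      (∫⁻ y, ENNReal.ofReal |(T y).det|⁻¹ * φ y ∂μ) * ∫⁻ x, g x ∂ν := by
  have hTx : AEMeasurable (fun p : E × Y ↦ T p.2 p.1) (ν.prod μ) :=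
    (ContinuousLinearMap.measurable_apply₂ (𝕜 := ℝ) (E := E) (F := E)).comp_aemeasurable
      (hT.comp_snd.prodMk measurable_fst.aemeasurable)
  have hprod : AEMeasurable (fun p : E × Y ↦ φ p.2 * g (T p.2 p.1)) (ν.prod μ) :=
    hφ.comp_snd.mul (hg.comp_aemeasurable hTx)
  have hweight : AEMeasurable (fun y ↦ ENNReal.ofReal |(T y).det|⁻¹ * φ y) μ :=
    (aemeasurable_abs_det_inv hT).ennreal_ofReal.mul hφ
  have hinner : ∀ᵐ y ∂μ, ∫⁻ x, φ y * g (T y x) ∂ν =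
      ENNReal.ofReal |(T y).det|⁻¹ * φ y * ∫⁻ x, g x ∂ν := by
    filter_upwards [hdet] with y hy
    rcases eq_or_ne (φ y) 0 with hφy | hφy
    · simp [hφy]
    · have hgT : Measurable fun x ↦ g (T y x) := hg.comp (T y).measurable
      have hcov : ∫⁻ x, g (T y x) ∂ν = ENNReal.ofReal |(T y).det|⁻¹ * ∫⁻ x, g x ∂ν :=
        lintegral_comp_linearMap (L := (T y : E →ₗ[ℝ] E)) (hy hφy) g
      rw [lintegral_const_mul _ hgT, hcov, mul_left_comm, mul_assoc]
  calc ∫⁻ x, ∫⁻ y, φ y * g (T y x) ∂μ ∂ν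
      = ∫⁻ y, ∫⁻ x, φ y * g (T y x) ∂ν ∂μ := lintegral_lintegral_swap hprod
    _ = ∫⁻ y, ENNReal.ofReal |(T y).det|⁻¹ * φ y * ∫⁻ x, g x ∂ν ∂μ := lintegral_congr_ae hinner
    _ = (∫⁻ y, ENNReal.ofReal |(T y).det|⁻¹ * φ y ∂μ) * ∫⁻ x, g x ∂ν :=
      lintegral_mul_const'' _ hweight

theorem integrable_det_inv_mul_of_schwartz_general [SFinite μ] {Φ : Y → ℝ} {f : E → ℝ}
    (hΦ : AEMeasurable Φ μ) (hΦ0 : 0 ≤ᵐ[μ] Φ) (hT : AEMeasurable T μ)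
    (hdet : ∀ᵐ y ∂μ, Φ y ≠ 0 → (T y).det ≠ 0)
    (hf : Measurable f) (hf0 : 0 ≤ᵐ[ν] f) (hfne : ¬ f =ᵐ[ν] 0)
    (hL1 : ∫⁻ x, ∫⁻ y, ENNReal.ofReal (Φ y * f (T y x)) ∂μ ∂ν < ∞) :
    Integrable (fun y ↦ |(T y).det|⁻¹ * Φ y) μ := by
  have hmeas : AEMeasurable (fun y ↦ |(T y).det|⁻¹ * Φ y) μ :=
    (aemeasurable_abs_det_inv hT).mul hΦ
  have hnonneg : 0 ≤ᵐ[μ] fun y ↦ |(T y).det|⁻¹ * Φ y := by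
    filter_upwards [hΦ0] with y hy using mul_nonneg (by positivity) hy
  have hdet_ofReal : ∀ᵐ y ∂μ, ENNReal.ofReal (Φ y) ≠ 0 → (T y).det ≠ 0 := by
    filter_upwards [hdet] with y hy hΦy using hy fun h ↦ hΦy (by simp [h])
  have hsplit (x : E) : ∫⁻ y, ENNReal.ofReal (Φ y * f (T y x)) ∂μ =
      ∫⁻ y, ENNReal.ofReal (Φ y) * ENNReal.ofReal (f (T y x)) ∂μ :=
    lintegral_congr_ae <| hΦ0.mono fun _ hy ↦ ENNReal.ofReal_mul hy
  simp_rw [hsplit] at hL1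
  rw [lintegral_lintegral_mul_comp_continuousLinearMap hΦ.ennreal_ofReal hT hdet_ofReal
    hf.ennreal_ofReal] at hL1
  refine ⟨hmeas.aestronglyMeasurable, (hasFiniteIntegral_iff_ofReal hnonneg).2 ?_⟩
  simp_rw [ENNReal.ofReal_mul (inv_nonneg.2 (abs_nonneg _))]
  exact ENNReal.lt_top_of_mul_ne_top_left hL1.ne
    (lintegral_ofReal_ne_zero hf.aemeasurable hf0 hfne)

end HausdorffOperator

section Matrix

variable {𝕜 ι : Type*} [RCLike 𝕜] [Fintype ι] [DecidableEq ι]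

theorem det_toEuclideanCLM (M : Matrix ι ι 𝕜) :
    (Matrix.toEuclideanCLM (n := ι) (𝕜 := 𝕜) M).det = M.det := by
  rw [← LinearMap.det_toLin (PiLp.basisFun 2 𝕜 ι) M, ← Matrix.toLpLin_eq_toLin]
  rfl

theorem measurable_toEuclideanCLM {Y : Type*} [MeasurableSpace Y] {A : Y → Matrix ι ι 𝕜}
    (hA : ∀ i j, Measurable fun y ↦ A y i j) :
    Measurable fun y ↦ Matrix.toEuclideanCLM (n := ι) (𝕜 := 𝕜) (A y) := by
  let L : (ι → ι → 𝕜) →ₗ[𝕜] EuclideanSpace 𝕜 ι →L[𝕜] EuclideanSpace 𝕜 ι :=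
    (Matrix.toEuclideanCLM (n := ι) (𝕜 := 𝕜)).toAlgEquiv.toLinearMap
  exact L.continuous_of_finiteDimensional.measurable.comp
    (measurable_pi_lambda _ fun i ↦ measurable_pi_lambda _ (hA i))

theorem matVec_eq_toEuclideanCLM {n : ℕ} (M : Matrix (Fin n) (Fin n) ℝ)
    (x : EuclideanSpace ℝ (Fin n)) :
    matVec M x = Matrix.toEuclideanCLM (n := Fin n) (𝕜 := ℝ) M x :=
  rfl

end Matrix

/-- For nonnegative measurable `Φ` and a matrix family `A(y)` invertible a.e. on
`supp Φ`, if there is a nonzero nonnegative Schwartz function `f` with `H_{Φ,A} f ∈ L¹(ℝⁿ)`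
(i.e. the unsigned double integral `∫∫ Φ(y) f(A(y)x) dy dx` is finite), then
`∫ |det A(y)|⁻¹ Φ(y) dy < ∞`. -/
theorem integrable_det_inv_mul_of_schwartz (n : ℕ)
    (Φ : EuclideanSpace ℝ (Fin n) → ℝ)
    (A : EuclideanSpace ℝ (Fin n) → Matrix (Fin n) (Fin n) ℝ)
    (hΦ : Measurable Φ) (hΦ0 : ∀ y, 0 ≤ Φ y)
    (hA : ∀ i j, Measurable fun y => A y i j)
    (hinv : ∀ᵐ y : EuclideanSpace ℝ (Fin n), Φ y ≠ 0 → (A y).det ≠ 0)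
    (f : SchwartzMap (EuclideanSpace ℝ (Fin n)) ℝ)
    (hf0 : ∀ x, 0 ≤ f x) (hfne : f ≠ 0)
    (hL1 : ∫⁻ x, ∫⁻ y, ENNReal.ofReal (Φ y * f (matVec (A y) x)) < ⊤) :
    Integrable (fun y => |(A y).det|⁻¹ * Φ y) := by
  have hf_ae : ¬ f =ᵐ[volume] 0 := fun h ↦
    hfne (DFunLike.coe_injective ((f.continuous.ae_eq_iff_eq volume continuous_zero).1 h))
  simp_rw [matVec_eq_toEuclideanCLM] at hL1
  simp_rw [← det_toEuclideanCLM] at hinv ⊢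
  exact integrable_det_inv_mul_of_schwartz_general hΦ.aemeasurable (.of_forall hΦ0)
    (measurable_toEuclideanCLM hA).aemeasurable hinv f.continuous.measurable (.of_forall hf0)
    hf_ae hL1

end
end

section
/- For every integer k ≥ 1, the adjoint Hardy operator H*, defined by H*f(x) = ∫_0^1 f(x/t) t^{-1} dt (which for x > 0 equals ∫_x^∞ f(s) s^{-1} ds), is not bounded on the Sobolev space W^{k,1}(ℝ): there exists f ∈ W^{k,1}(ℝ) such that H*f ∉ W^{k,1}(ℝ). -/
open MeasureTheory

noncomputable section

/-- `g` is the `m`-th weak derivative of `f` on `ℝ`: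
`∫ f φ^{(m)} = (−1)^m ∫ g φ` for all test functions `φ ∈ C_c^∞(ℝ)`. -/
def IsWeakDerivR (m : ℕ) (f g : ℝ → ℝ) : Prop :=
  ∀ φ : ℝ → ℝ, ContDiff ℝ (⊤ : ℕ∞) φ → HasCompactSupport φ →
    ∫ x, f x * iteratedDeriv m φ x = (-1 : ℝ) ^ m * ∫ x, g x * φ x

/-- `f ∈ W^{k,1}(ℝ)`: `f` and all its weak derivatives up to order `k` exist and are in `L¹`. -/
def MemW1 (k : ℕ) (f : ℝ → ℝ) : Prop :=
  ∃ D : ℕ → ℝ → ℝ, D 0 = f ∧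
    ∀ m : ℕ, m ≤ k → Integrable (D m) ∧ IsWeakDerivR m f (D m)

/-- The adjoint Hardy operator `H*f(x) = ∫₀¹ f(x/t) t⁻¹ dt`. -/
def adjHardyOp (f : ℝ → ℝ) : ℝ → ℝ := fun x => ∫ t in (0 : ℝ)..1, f (x / t) / t

/-!
For `x > 0` the substitution `s = x / t` turns `H*f(x)` into `∫_x^∞ f(s) / s ds`. Hence, if `f` is
integrable and continuous on `(0, ∞)`, then `H*f` is `C¹` there with derivative `-f(x) / x`. On an
open set where a function is continuously differentiable, an integrable weak derivative agrees
almost everywhere with the classical one, so `H*f ∈ W^{k,1}(ℝ)` with `k ≥ 1` would make `f(x) / x`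
integrable on `(0, ∞)`. This is impossible as soon as `f` has a nonzero limit at `0⁺`, and a bump
function centred at `0` is such an `f` in `W^{k,1}(ℝ)`.
-/

open Filter Set TopologicalSpace Topology

section IteratedDeriv

variable {𝕜 F : Type*} [NontriviallyNormedField 𝕜] [NormedAddCommGroup F] [NormedSpace 𝕜 F]
  {f : 𝕜 → F} {m : ℕ}

lemma hasDerivAt_iteratedDerivWithin {U : Set 𝕜} {x : 𝕜} (hU : IsOpen U)
    (hf : ContDiffOn 𝕜 (m + 1 : ℕ) f U) (hx : x ∈ U) :
    HasDerivAt (iteratedDerivWithin m f U) (iteratedDerivWithin (m + 1) f U x) x := by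
  rw [iteratedDerivWithin_succ]
  have hdiff := hf.differentiableOn_iteratedDerivWithin (m := m) (mod_cast m.lt_succ_self)
    hU.uniqueDiffOn x hx
  exact hdiff.hasDerivWithinAt.hasDerivAt (hU.mem_nhds hx)

lemma hasCompactSupport_iteratedDeriv (hf : HasCompactSupport f) (m : ℕ) :
    HasCompactSupport (iteratedDeriv m f) := by
  induction m with
  | zero => simpa only [iteratedDeriv_zero] using hf
  | succ m ih => simpa only [iteratedDeriv_succ] using ih.deriv

end IteratedDeriv

section Integral

variable {F : Type*} [NormedAddCommGroup F] [NormedSpace ℝ F]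

lemma locallyIntegrableOn_iteratedDerivWithin {m : ℕ} {f : ℝ → F} {U : Set ℝ} (hU : IsOpen U)
    (hf : ContDiffOn ℝ m f U) : LocallyIntegrableOn (iteratedDerivWithin m f U) U :=
  (hf.continuousOn_iteratedDerivWithin le_rfl hU.uniqueDiffOn).locallyIntegrableOn
    hU.measurableSet

lemma integrable_mul_of_tsupport_subset {X : Type*} [TopologicalSpace X]
    [MetrizableSpace X] [MeasurableSpace X] [OpensMeasurableSpace X] {μ : Measure X}
    {g φ : X → ℝ} {U : Set X} (hg : LocallyIntegrableOn g U μ) (hφ : Continuous φ)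
    (hφc : HasCompactSupport φ) (hφU : tsupport φ ⊆ U) : Integrable (g * φ) μ := by
  have hsupp : Function.support (g * φ) ⊆ tsupport φ :=
    (Function.support_mul_subset_right g φ).trans (subset_tsupport φ)
  rw [← integrableOn_iff_integrable_of_support_subset hsupp]
  exact (hg.integrableOn_compact_subset hφU hφc).mul_continuousOn hφ.continuousOn hφc

lemma hasDerivAt_integral_Ioi [CompleteSpace F] {f : ℝ → F} {a x : ℝ} (hf : IntegrableOn f (Ioi a))
    (hcont : ContinuousOn f (Ioi a)) (hx : a < x) :
    HasDerivAt (fun y => ∫ s in Ioi y, f s) (-f x) x := by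
  have hnear : (fun y => ∫ s in Ioi y, f s) =ᶠ[𝓝 x]
      fun y => (∫ s in y..x, f s) + ∫ s in Ioi x, f s := by
    filter_upwards [Ioi_mem_nhds hx] with y hy
    exact (intervalIntegral.integral_interval_add_Ioi
      (hf.mono_set (Ioi_subset_Ioi (le_of_lt hy))) (hf.mono_set (Ioi_subset_Ioi hx.le))).symm
  have hmeas : StronglyMeasurableAtFilter f (𝓝 x) :=
    hcont.stronglyMeasurableAtFilter isOpen_Ioi x hx
  exact ((intervalIntegral.integral_hasDerivAt_left .refl hmeas
    (hcont.continuousAt (Ioi_mem_nhds hx))).add_const _).congr_of_eventuallyEq hnear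

lemma integrableOn_div_id_Ioi {f : ℝ → ℝ} {x : ℝ} (hf : IntegrableOn f (Ioi x)) (hx : 0 < x) :
    IntegrableOn (fun s => f s / s) (Ioi x) := by
  simp only [div_eq_mul_inv]
  refine Integrable.mul_bdd (c := x⁻¹) hf measurable_inv.aestronglyMeasurable ?_
  filter_upwards [ae_restrict_mem measurableSet_Ioi] with s hs
  rw [norm_inv, Real.norm_of_nonneg (hx.trans hs).le]
  exact inv_anti₀ hx hs.le

lemma not_integrableOn_div_id_Ioi {f : ℝ → ℝ} {c : ℝ} (hc : c ≠ 0)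
    (hf : Tendsto f (𝓝[>] 0) (𝓝 c)) : ¬ IntegrableOn (fun x => f x / x) (Ioi 0) := by
  have hO : deriv Real.log =O[𝓝[>] 0] fun x => f x / x := by
    have hone : (fun _ => (1 : ℝ)) =O[𝓝[>] 0] f :=
      (Asymptotics.isBigO_const_const 1 hc _).trans
        ((Asymptotics.isEquivalent_const_iff_tendsto hc).2 hf).isBigO_symm
    simpa only [Real.deriv_log', one_mul, div_eq_mul_inv] using
      hone.mul (Asymptotics.isBigO_refl (fun x : ℝ => x⁻¹) _)
  refine not_integrableOn_of_tendsto_norm_atTop_of_deriv_isBigO_filter (f := Real.log) (𝓝[>] 0)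
    self_mem_nhdsWithin ?_ (tendsto_abs_atBot_atTop.comp Real.tendsto_log_nhdsGT_zero) hO
  filter_upwards [self_mem_nhdsWithin] with x hx using Real.differentiableAt_log (ne_of_gt hx)

end Integral

section WeakDerivative

variable {m k : ℕ} {f g φ : ℝ → ℝ} {U : Set ℝ}

lemma integral_mul_iteratedDeriv_of_tsupport_subset (hU : IsOpen U) (hf : ContDiffOn ℝ m f U)
    (hφ : ContDiff ℝ m φ) (hφc : HasCompactSupport φ) (hφU : tsupport φ ⊆ U) :
    ∫ x, f x * iteratedDeriv m φ x = (-1) ^ m * ∫ x, iteratedDerivWithin m f U x * φ x := by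
  induction m generalizing φ with
  | zero => simp
  | succ m ih =>
    have hle : (m : WithTop ℕ∞) ≤ (m + 1 : ℕ) := mod_cast m.le_succ
    have hφ' : ContDiff ℝ m (deriv φ) := (contDiff_succ_iff_deriv.1 (mod_cast hφ)).2.2
    have hφU' : tsupport (deriv φ) ⊆ U := tsupport_deriv_subset.trans hφU
    have hloc : LocallyIntegrableOn (iteratedDerivWithin m f U) U :=
      locallyIntegrableOn_iteratedDerivWithin hU (hf.of_le hle)
    have hloc' : LocallyIntegrableOn (iteratedDerivWithin (m + 1) f U) U :=
      locallyIntegrableOn_iteratedDerivWithin hU hf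
    have parts : ∫ x, iteratedDerivWithin m f U x * deriv φ x =
        -∫ x, iteratedDerivWithin (m + 1) f U x * φ x :=
      integral_mul_deriv_eq_deriv_mul_of_integrable
        (fun x hx => hasDerivAt_iteratedDerivWithin hU hf (hφU hx))
        (fun x _ => (hφ.differentiable (by simp) x).hasDerivAt)
        (integrable_mul_of_tsupport_subset hloc hφ'.continuous hφc.deriv hφU')
        (integrable_mul_of_tsupport_subset hloc' hφ.continuous hφc hφU)
        (integrable_mul_of_tsupport_subset hloc hφ.continuous hφc hφU)
    rw [iteratedDeriv_succ', ih (hf.of_le hle) hφ' hφc.deriv hφU', parts, pow_succ]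
    ring

lemma isWeakDerivR_iteratedDeriv (hf : ContDiff ℝ m f) : IsWeakDerivR m f (iteratedDeriv m f) := by
  intro φ hφ hφc
  simpa only [iteratedDerivWithin_univ] using
    integral_mul_iteratedDeriv_of_tsupport_subset isOpen_univ hf.contDiffOn
      (hφ.of_le (mod_cast le_top)) hφc (subset_univ _)

lemma IsWeakDerivR.ae_eq_iteratedDerivWithin (h : IsWeakDerivR m f g) (hU : IsOpen U)
    (hf : ContDiffOn ℝ m f U) (hg : LocallyIntegrableOn g U) :
    ∀ᵐ x, x ∈ U → g x = iteratedDerivWithin m f U x := by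
  have hloc : LocallyIntegrableOn (iteratedDerivWithin m f U) U :=
    locallyIntegrableOn_iteratedDerivWithin hU hf
  suffices ∀ᵐ x, x ∈ U → (g - iteratedDerivWithin m f U) x = 0 by
    filter_upwards [this] with x hx hxU using sub_eq_zero.1 (hx hxU)
  refine hU.ae_eq_zero_of_integral_contDiff_smul_eq_zero (hg.sub hloc) fun φ hφ hφc hφU => ?_
  have hpair : ∫ x, g x * φ x = ∫ x, iteratedDerivWithin m f U x * φ x :=
    mul_left_cancel₀ (pow_ne_zero m (neg_ne_zero.2 one_ne_zero)) <|
      (h φ hφ hφc).symm.trans <| integral_mul_iteratedDeriv_of_tsupport_subset hU hf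
        (hφ.of_le (mod_cast le_top)) hφc hφU
  have hsub : ∫ x, (g x * φ x - iteratedDerivWithin m f U x * φ x) = 0 := by
    rw [← sub_eq_zero.2 hpair]
    exact integral_sub (integrable_mul_of_tsupport_subset hg hφ.continuous hφc hφU)
      (integrable_mul_of_tsupport_subset hloc hφ.continuous hφc hφU)
  simpa only [Pi.sub_apply, smul_eq_mul, mul_comm (φ _), sub_mul] using hsub

lemma memW1_of_contDiff_of_hasCompactSupport (hf : ContDiff ℝ k f) (hfc : HasCompactSupport f) :
    MemW1 k f := by
  refine ⟨fun m => iteratedDeriv m f, iteratedDeriv_zero, fun m hm => ⟨?_, ?_⟩⟩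
  · exact (hf.continuous_iteratedDeriv m (mod_cast hm)).integrable_of_hasCompactSupport
      (hasCompactSupport_iteratedDeriv hfc m)
  · exact isWeakDerivR_iteratedDeriv (hf.of_le (mod_cast hm))

lemma MemW1.integrableOn_iteratedDerivWithin (h : MemW1 k f) (hm : m ≤ k) (hU : IsOpen U)
    (hf : ContDiffOn ℝ m f U) : IntegrableOn (iteratedDerivWithin m f U) U := by
  obtain ⟨D, -, hD⟩ := h
  obtain ⟨hint, hweak⟩ := hD m hm
  have hae := hweak.ae_eq_iteratedDerivWithin hU hf (hint.locallyIntegrable.locallyIntegrableOn U)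
  exact hint.integrableOn.congr ((ae_restrict_iff' hU.measurableSet).2 hae)

end WeakDerivative

section AdjointHardy

variable {k : ℕ} {f : ℝ → ℝ} {x c : ℝ}

lemma image_const_div_Ioi {K : Type*} [Field K] [LinearOrder K] [IsStrictOrderedRing K]
    {x : K} (hx : 0 < x) : (fun s => x / s) '' Ioi x = Ioo 0 1 := by
  ext t
  constructor
  · rintro ⟨s, hs, rfl⟩
    exact ⟨div_pos hx (hx.trans hs), (div_lt_one (hx.trans hs)).2 hs⟩
  · rintro ⟨ht0, ht1⟩
    exact ⟨x / t, (lt_div_iff₀ ht0).2 (mul_lt_of_lt_one_right hx ht1), div_div_cancel₀ hx.ne'⟩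

lemma adjHardyOp_eq_integral_Ioi (f : ℝ → ℝ) (hx : 0 < x) :
    adjHardyOp f x = ∫ s in Ioi x, f s / s := by
  have hderiv : ∀ s ∈ Ioi x, HasDerivWithinAt (fun s => x / s) (-x / s ^ 2) (Ioi x) s := by
    intro s hs
    simpa only [div_eq_mul_inv, mul_neg, neg_mul] using
      ((hasDerivAt_inv (hx.trans hs).ne').const_mul x).hasDerivWithinAt
  have hinj : InjOn (fun s => x / s) (Ioi x) := fun s _ t _ hst =>
    inv_injective (mul_left_cancel₀ hx.ne' (by simpa only [div_eq_mul_inv] using hst))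
  rw [adjHardyOp, intervalIntegral.integral_of_le zero_le_one, integral_Ioc_eq_integral_Ioo,
    ← image_const_div_Ioi hx,
    integral_image_eq_integral_abs_deriv_smul measurableSet_Ioi hderiv hinj]
  refine setIntegral_congr_fun measurableSet_Ioi fun s hs => ?_
  have hs0 : 0 < s := hx.trans hs
  simp only [neg_div, abs_neg, abs_of_pos (div_pos hx (pow_pos hs0 2)),
    div_div_cancel₀ hx.ne', smul_eq_mul]
  field_simp

lemma hasDerivAt_adjHardyOp (hf : IntegrableOn f (Ioi 0)) (hcont : ContinuousOn f (Ioi 0))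
    (hx : 0 < x) : HasDerivAt (adjHardyOp f) (-(f x / x)) x := by
  have hnear : adjHardyOp f =ᶠ[𝓝 x] fun y => ∫ s in Ioi y, f s / s := by
    filter_upwards [Ioi_mem_nhds hx] with y hy using adjHardyOp_eq_integral_Ioi f hy
  have hcont' : ContinuousOn (fun s => f s / s) (Ioi (x / 2)) :=
    (hcont.mono (Ioi_subset_Ioi (half_pos hx).le)).div continuousOn_id fun s hs =>
      ((half_pos hx).trans hs).ne'
  have hint : IntegrableOn (fun s => f s / s) (Ioi (x / 2)) :=
    integrableOn_div_id_Ioi (hf.mono_set (Ioi_subset_Ioi (half_pos hx).le)) (half_pos hx)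
  exact (hasDerivAt_integral_Ioi hint hcont' (half_lt_self hx)).congr_of_eventuallyEq hnear

lemma eqOn_derivWithin_adjHardyOp (hf : IntegrableOn f (Ioi 0)) (hcont : ContinuousOn f (Ioi 0)) :
    EqOn (derivWithin (adjHardyOp f) (Ioi 0)) (fun x => -(f x / x)) (Ioi 0) := fun x hx =>
  (hasDerivAt_adjHardyOp hf hcont hx).hasDerivWithinAt.derivWithin (uniqueDiffOn_Ioi 0 x hx)

lemma contDiffOn_adjHardyOp (hf : IntegrableOn f (Ioi 0)) (hcont : ContinuousOn f (Ioi 0)) :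
    ContDiffOn ℝ 1 (adjHardyOp f) (Ioi 0) := by
  refine (contDiffOn_one_iff_derivWithin (uniqueDiffOn_Ioi 0)).2 ⟨fun x hx =>
    (hasDerivAt_adjHardyOp hf hcont hx).differentiableAt.differentiableWithinAt, ?_⟩
  exact (hcont.div continuousOn_id fun x hx => ne_of_gt hx).neg.congr
    (eqOn_derivWithin_adjHardyOp hf hcont)

lemma not_memW1_adjHardyOp (hk : 1 ≤ k) (hf : IntegrableOn f (Ioi 0))
    (hcont : ContinuousOn f (Ioi 0)) (hc : c ≠ 0) (hlim : Tendsto f (𝓝[>] 0) (𝓝 c)) :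
    ¬ MemW1 k (adjHardyOp f) := by
  intro h
  have hint : IntegrableOn (derivWithin (adjHardyOp f) (Ioi 0)) (Ioi 0) := by
    simpa only [iteratedDerivWithin_one] using
      h.integrableOn_iteratedDerivWithin hk isOpen_Ioi (mod_cast contDiffOn_adjHardyOp hf hcont)
  have hneg : IntegrableOn (fun x => -(f x / x)) (Ioi 0) :=
    hint.congr_fun (eqOn_derivWithin_adjHardyOp hf hcont) measurableSet_Ioi
  exact not_integrableOn_div_id_Ioi hc hlim ((integrable_neg_iff (f := fun x => f x / x)).1 hneg)

end AdjointHardy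

/-- For every integer `k ≥ 1`, the adjoint Hardy operator is not bounded on
`W^{k,1}(ℝ)`: there is `f ∈ W^{k,1}(ℝ)` with `H*f ∉ W^{k,1}(ℝ)`. -/
theorem adjHardyOp_not_bounded_sobolev (k : ℕ) (hk : 1 ≤ k) :
    ∃ f : ℝ → ℝ, MemW1 k f ∧ ¬ MemW1 k (adjHardyOp f) := by
  let f : ContDiffBump (0 : ℝ) := default
  have hcont : Continuous f := f.continuous
  have hzero : f 0 = 1 := f.one_of_mem_closedBall (Metric.mem_closedBall_self f.rIn_pos.le)
  refine ⟨f, memW1_of_contDiff_of_hasCompactSupport f.contDiff f.hasCompactSupport,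
    not_memW1_adjHardyOp hk f.integrable.integrableOn hcont.continuousOn one_ne_zero ?_⟩
  exact hzero ▸ hcont.continuousWithinAt

end
end
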